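/- arXiv:2003.04990 — 2 statements merged into one kernel-verified Lean document; each statement's English description precedes it below -/
import Mathlib

section
/- Let d ≥ 1 be an integer, let q = s_d − 1 where s_d is the d-th term of Sylvester's sequence, and let N ≥ q^{dq}. Then in the hat guessing game on G_d(N) with q colors, the players have a winning strategy; that is, there exists an assignment to each vertex v of a function g_v from q-colorings of its neighborhood to {1,…,q} such that for every q-coloring χ of the vertices, some vertex v satisfies g_v(χ restricted to N(v)) = χ(v). -/
/-- A winning guessing strategy in the hat guessing game on `G` with `q` colors:
each vertex `v` gets a guessing function from colorings of its open neighborhood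
to colors, such that for every coloring some vertex guesses its own color. -/
def HatWinning {V : Type*} (G : SimpleGraph V) (q : ℕ) : Prop :=
  ∃ g : (v : V) → ({w : V // G.Adj v w} → Fin q) → Fin q,
    ∀ χ : V → Fin q, ∃ v : V, g v (fun w => χ w.1) = χ v

/-- The hat guessing number of `G`: the largest number of colors for which the
players have a winning strategy. -/
noncomputable def hatGuessingNumber {V : Type*} (G : SimpleGraph V) : ℕ :=
  sSup {q : ℕ | HatWinning G q}

/-- Sylvester's sequence: `s 0 = 2`, `s (n+1) = s n ^ 2 - s n + 1`. -/
def sylvester : ℕ → ℕ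
  | 0 => 2
  | n + 1 => sylvester n ^ 2 - sylvester n + 1

/-- The graph `G_d(N)`: vertices are the vertices of the complete rooted `N`-ary
tree of depth `d` (encoded as lists of child-indices of length at most `d`), and
each vertex is adjacent to all of its ancestors (its proper prefixes). -/
def ancTree (d N : ℕ) : SimpleGraph {l : List (Fin N) // l.length ≤ d} where
  Adj v w := v ≠ w ∧ (v.1 <+: w.1 ∨ w.1 <+: v.1)
  symm := by
    constructor
    intro v w h
    exact ⟨h.1.symm, h.2.symm⟩
  loopless := by
    constructor
    intro v h
    exact h.1 rfl

/-- The book graph `B_{d,n}`: a spine of `d` vertices forming a clique, completely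
joined to `n` pages forming an independent set. -/
def bookGraph (d n : ℕ) : SimpleGraph (Fin d ⊕ Fin n) where
  Adj x y := x ≠ y ∧ (x.isLeft ∨ y.isLeft)
  symm := by
    constructor
    intro x y h
    exact ⟨h.1.symm, h.2.symm⟩
  loopless := by
    constructor
    intro x h
    exact h.1 rfl

/-- A set `S ⊆ ℕ^d` is coverable if it can be partitioned into parts `S_1, …, S_d`
such that `S_i` contains at most one point on every line parallel to the `i`-th
coordinate axis, i.e. two distinct points in part `i` differ in some coordinate
other than the `i`-th. -/
def Coverable {d : ℕ} (S : Set (Fin d → ℕ)) : Prop :=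
  ∃ f : (Fin d → ℕ) → Fin d, ∀ x ∈ S, ∀ y ∈ S,
    x ≠ y → f x = f y → ∃ j : Fin d, j ≠ f x ∧ x j ≠ y j

/-- `hcov d` is `h(ℕ^d)`: the largest `t` such that every `t`-element subset of
`ℕ^d` is coverable. -/
noncomputable def hcov (d : ℕ) : ℕ :=
  sSup {t : ℕ | ∀ S : Set (Fin d → ℕ), S.Finite → S.ncard = t → Coverable S}

/-- `p` is a left-to-right path with `k` edges in a graph on `Fin n` with the
natural vertex ordering: a strictly increasing sequence of `k+1` vertices in which
consecutive vertices are adjacent. -/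
def IsLTRPath {n : ℕ} (G : SimpleGraph (Fin n)) (k : ℕ) (p : Fin (k + 1) → Fin n) : Prop :=
  StrictMono p ∧ ∀ i : Fin k, G.Adj (p i.castSucc) (p i.succ)

/-- The depth of a vertex `v`: the largest number of edges in a left-to-right path
ending at `v`. -/
noncomputable def ltrDepth {n : ℕ} (G : SimpleGraph (Fin n)) (v : Fin n) : ℕ :=
  sSup {k : ℕ | ∃ p : Fin (k + 1) → Fin n, IsLTRPath G k p ∧ p (Fin.last k) = v}

/-- With a set `B` of fewer than `t * (t + 1)` candidate pairs, a player who sees the first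
coordinate can rule out that a whole translate `T × {c}` of a `t`-element set survives in `B`. -/
lemma exists_guess_hitting {A : Type} {t q : ℕ} [NeZero q] (T : Fin t → A)
    (B : Set (A × Fin q)) :
    ∃ f : A → Fin q, Function.Injective T → B.Finite → B.ncard < t * (t + 1) →
      ∀ c, ∃ j, f (T j) = c ∨ (T j, c) ∉ B := by
  classical
  by_cases hyp : Function.Injective T ∧ B.Finite ∧ B.ncard < t * (t + 1)
  · obtain ⟨hT, hfin, hB⟩ := hyp
    let C : Finset (Fin q) := Finset.univ.filter fun c => ∀ j, (T j, c) ∈ B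
    have hprod : t * C.card ≤ B.ncard := by
      let S : Finset (A × Fin q) := Finset.univ.image T ×ˢ C
      have hSB : (S : Set (A × Fin q)) ⊆ B := by
        rintro ⟨a, c⟩ h
        simp only [S, C, Finset.coe_product, Set.mem_prod, Finset.mem_coe, Finset.mem_image,
          Finset.mem_univ, true_and, Finset.mem_filter] at h
        obtain ⟨⟨j, rfl⟩, h⟩ := h
        exact h j
      have h := Set.ncard_le_ncard hSB hfin
      rwa [Set.ncard_coe_finset, Finset.card_product, Finset.card_image_of_injective _ hT,
        Finset.card_univ, Fintype.card_fin] at h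
    have hC : Fintype.card C ≤ Fintype.card (Fin t) := by
      rw [Fintype.card_coe, Fintype.card_fin]
      exact Nat.lt_succ_iff.mp (lt_of_mul_lt_mul_left (hprod.trans_lt hB) (Nat.zero_le t))
    obtain ⟨e⟩ := Function.Embedding.nonempty_of_card_le hC
    let r : A → Fin q := fun a => if h : ∃ c : C, T (e c) = a then h.choose else 0
    refine ⟨r, fun _ _ _ c => ?_⟩
    by_cases hc : c ∈ C
    · refine ⟨e ⟨c, hc⟩, Or.inl ?_⟩
      have h : ∃ c' : C, T (e c') = T (e ⟨c, hc⟩) := ⟨_, rfl⟩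
      have heq := e.injective (hT h.choose_spec)
      simp only [r, dif_pos h, heq]
    · have h : ∃ j, (T j, c) ∉ B := by simpa [C] using hc
      exact h.imp fun _ => Or.inr
  · exact ⟨fun _ => 0, fun h₁ h₂ h₃ => absurd ⟨h₁, h₂, h₃⟩ hyp⟩

/-- A guess of the vertex `v` of the depth-`e` tree is local if it only depends on the colors of
the other vertices of the tree that are comparable to `v`. -/
def IsLocalGuess {N q : ℕ} (e : ℕ) (v : List (Fin N)) (f : (List (Fin N) → Fin q) → Fin q) :
    Prop :=
  ∀ χ χ' : List (Fin N) → Fin q,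
    (∀ w, w.length ≤ e → v ≠ w → (v <+: w ∨ w <+: v) → χ w = χ' w) → f χ = f χ'

/-- All players of the depth-`e` tree see an additional element of `A`. For every injective
`t`-tuple in `A` they have a local strategy such that, for every coloring of the tree, some member
of the tuple makes some player guess correctly. -/
def WinsOnTuples (N q e t : ℕ) (A : Type) : Prop :=
  ∀ T : Fin t → A, ∃ g : List (Fin N) → A → (List (Fin N) → Fin q) → Fin q,
    (∀ v, v.length ≤ e → ∀ a, IsLocalGuess e v (g v a)) ∧
      (Function.Injective T → ∀ χ, ∃ v, v.length ≤ e ∧ ∃ j, g v (T j) χ = χ v)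

lemma winsOnTuples_zero (N q : ℕ) [NeZero q] (A : Type) : WinsOnTuples N q 0 q A := by
  intro T
  refine ⟨fun _ a _ => Function.invFun T a, fun _ _ _ _ _ _ => rfl, fun hT χ => ?_⟩
  exact ⟨[], le_rfl, χ [], Function.leftInverse_invFun hT _⟩

lemma WinsOnTuples.succ {N q e t : ℕ} [NeZero q] {A : Type} [Fintype A] [Nonempty A]
    (h : WinsOnTuples N q e (t * (t + 1)) (A × Fin q))
    (hN : (Fintype.card A * q) ^ (t * (t + 1)) ≤ N) : WinsOnTuples N q (e + 1) t A := by
  classical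
  intro T
  choose g hlocal hwin using h
  have hcard : Fintype.card (Fin (t * (t + 1)) → A × Fin q) ≤ Fintype.card (Fin N) := by
    simpa using hN
  obtain ⟨code⟩ := Function.Embedding.nonempty_of_card_le hcard
  let G : Fin N → List (Fin N) → A × Fin q → (List (Fin N) → Fin q) → Fin q :=
    fun k => g (Function.invFun code k)
  -- the pairs (outer information, root color) for which every player below the root is wrong
  let B : (List (Fin N) → Fin q) → Set (A × Fin q) := fun χ =>
    {p | ∀ k l, l.length ≤ e → G k l p (fun m => χ (k :: m)) ≠ χ (k :: l)}
  choose r hr using exists_guess_hitting (q := q) T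
  let F : List (Fin N) → A → (List (Fin N) → Fin q) → Fin q
    | [], a, χ => r (B χ) a
    | k :: l, a, χ => G k l (a, χ []) (fun m => χ (k :: m))
  refine ⟨F, ?_, ?_⟩
  · rintro (_ | ⟨k, l⟩) hv a χ χ' hχ
    · have hagree : ∀ k l, l.length ≤ e → χ (k :: l) = χ' (k :: l) := fun k l hl =>
        hχ _ (by simpa using hl) (by simp) (by simp)
      have hB : B χ = B χ' := by
        ext p
        refine forall_congr' fun k => forall_congr' fun l => forall_congr' fun hl => ?_
        have hG : G k l p (fun m => χ (k :: m)) = G k l p (fun m => χ' (k :: m)) :=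
          hlocal _ l hl p _ _ fun w hw _ _ => hagree k w hw
        rw [hagree k l hl, hG]
      exact congrArg (fun S => r S a) hB
    · have hroot : χ [] = χ' [] := hχ [] (by simp) (by simp) (by simp)
      change G k l (a, χ []) _ = G k l (a, χ' []) _
      rw [hroot]
      refine hlocal _ l (by simpa using hv) _ _ _ fun w hw hne hcomp => ?_
      exact hχ _ (by simpa using hw) (by simpa using hne) (by simpa using hcomp)
  · intro hT χ
    have hB : (B χ).ncard < t * (t + 1) := by
      by_contra! hle
      have hle' : Fintype.card (Fin (t * (t + 1))) ≤ Fintype.card (B χ) := by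
        rwa [Fintype.card_fin, ← Nat.card_eq_fintype_card, Nat.card_coe_set_eq]
      obtain ⟨emb⟩ := Function.Embedding.nonempty_of_card_le hle'
      let T' : Fin (t * (t + 1)) → A × Fin q := fun j => emb j
      obtain ⟨l, hl, j, hj⟩ :=
        hwin T' (Subtype.val_injective.comp emb.injective) fun m => χ (code T' :: m)
      refine (emb j).2 (code T') l hl ?_
      simp only [G, Function.leftInverse_invFun code.injective T']
      exact hj
    obtain ⟨j, hj | hj⟩ := hr (B χ) hT (Set.toFinite _) hB (χ [])
    · exact ⟨[], by simp, j, hj⟩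
    · simp only [B, Set.mem_ofPred_eq, not_forall, not_not] at hj
      obtain ⟨k, l, hl, hj⟩ := hj
      exact ⟨k :: l, by simpa using hl, j, hj⟩

lemma two_le_sylvester (n : ℕ) : 2 ≤ sylvester n := by
  induction n with
  | zero => exact le_rfl
  | succ n ih =>
    have h : sylvester n * 2 ≤ sylvester n * sylvester n := Nat.mul_le_mul_left _ ih
    rw [sylvester, sq]
    omega

lemma sylvester_succ_sub_one (n : ℕ) :
    sylvester (n + 1) - 1 = (sylvester n - 1) * (sylvester n - 1 + 1) := by
  have h := two_le_sylvester n
  rw [sylvester, Nat.add_sub_cancel, Nat.sub_add_cancel (by omega), Nat.sub_mul, one_mul, sq]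

lemma monotone_sylvester_sub_one : Monotone fun n => sylvester n - 1 :=
  monotone_nat_of_le_succ fun n => by
    rw [sylvester_succ_sub_one]
    exact Nat.le_mul_of_pos_right _ (Nat.succ_pos _)

lemma winsOnTuples_sylvester {d N q : ℕ} [NeZero q] (hq : q = sylvester d - 1)
    (hN : q ^ (d * q) ≤ N) (e : ℕ) :
    ∀ i, i + e = d → ∀ (A : Type) [Fintype A] [Nonempty A], Fintype.card A ≤ q ^ i →
      WinsOnTuples N q e (sylvester i - 1) A := by
  have hq0 : 0 < q := NeZero.pos q
  induction e with
  | zero =>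
    rintro i rfl A _ _ _
    have h := winsOnTuples_zero N q A
    rwa [hq] at h ⊢
  | succ e ih =>
    intro i hi A _ _ hA
    have hcard : Fintype.card A * q ≤ q ^ (i + 1) := by
      rw [pow_succ]
      exact Nat.mul_le_mul_right q hA
    have h := ih (i + 1) (by omega) (A × Fin q) (by simpa using hcard)
    have ht : sylvester (i + 1) - 1 ≤ q :=
      (monotone_sylvester_sub_one (by omega : i + 1 ≤ d)).trans_eq hq.symm
    rw [sylvester_succ_sub_one] at h ht
    refine h.succ ((Nat.pow_le_pow_left hcard _).trans (le_trans ?_ hN))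
    rw [← pow_mul]
    exact Nat.pow_le_pow_right hq0 (Nat.mul_le_mul (by omega) ht)

/-- Lower bound in Theorem 1: with `q = s_d - 1` colors and `N ≥ q^(dq)`, the
players have a winning strategy on `G_d(N)`. -/
theorem hatWinning_ancTree_lower (d : ℕ) (hd : 1 ≤ d) (q : ℕ) (hq : q = sylvester d - 1)
    (N : ℕ) (hN : q ^ (d * q) ≤ N) :
    HatWinning (ancTree d N) q := by
  classical
  have hpos : 0 < q := by
    have h := two_le_sylvester d
    omega
  have : NeZero q := ⟨hpos.ne'⟩
  obtain ⟨g, hlocal, hwin⟩ :=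
    winsOnTuples_sylvester hq hN d 0 (by omega) Unit (by simp) fun _ => ()
  let extend : (v : {l : List (Fin N) // l.length ≤ d}) →
      ({w // (ancTree d N).Adj v w} → Fin q) → List (Fin N) → Fin q := fun v x l =>
    if h : ∃ hl : l.length ≤ d, (ancTree d N).Adj v ⟨l, hl⟩ then x ⟨⟨l, h.1⟩, h.2⟩ else 0
  refine ⟨fun v x => g v.1 () (extend v x), fun χ => ?_⟩
  let χ' : List (Fin N) → Fin q := fun l => if h : l.length ≤ d then χ ⟨l, h⟩ else 0
  have hsub : Subsingleton (Fin (sylvester 0 - 1)) := inferInstanceAs (Subsingleton (Fin 1))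
  obtain ⟨v, hv, _, hguess⟩ := hwin (Function.injective_of_subsingleton _) χ'
  refine ⟨⟨v, hv⟩, ?_⟩
  have hχ : χ' v = χ ⟨v, hv⟩ := dif_pos hv
  rw [← hχ, ← hguess]
  refine hlocal v hv () _ _ fun w hw hne hcomp => ?_
  have hadj : ∃ hl : w.length ≤ d, (ancTree d N).Adj ⟨v, hv⟩ ⟨w, hl⟩ :=
    ⟨hw, fun h => hne (congrArg Subtype.val h), hcomp⟩
  simp only [extend, χ', dif_pos hadj, dif_pos hw]
end

section
/- Let d ≥ 1 and n ≥ 1 be integers, and set q = h(ℕ^d) + 1, where h(ℕ^d) is the largest t such that every t-element subset of ℕ^d is coverable. Then in the hat guessing game on the book graph B_{d,n} with q + 1 colors, the players have no winning strategy; that is, for every assignment to each vertex v of a function g_v from (q+1)-colorings of its neighborhood to {1,…,q+1}, there exists a (q+1)-coloring χ of the vertices such that every vertex v satisfies g_v(χ restricted to N(v)) ≠ χ(v). Consequently HG(B_{d,n}) ≤ h(ℕ^d) + 1 for all n. -/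
theorem Coverable.mono {d : ℕ} {S T : Set (Fin d → ℕ)} (hST : S ⊆ T) (hT : Coverable T) :
    Coverable S := by
  obtain ⟨f, hf⟩ := hT
  exact ⟨f, fun x hx y hy => hf x (hST hx) y (hST hy)⟩

/-- The grid `{0, …, d}^d` is not coverable: a point of the `i`-th part is determined by its other
coordinates, so each part has at most `(d + 1)^(d - 1)` points. -/
theorem not_coverable_grid (d : ℕ) :
    ¬ Coverable (Fintype.piFinset (fun _ : Fin d => Finset.range (d + 1)) : Set (Fin d → ℕ)) := by
  rintro ⟨f, hf⟩
  cases d with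
  | zero => exact (f 0).elim0
  | succ m =>
    set G := Fintype.piFinset (fun _ : Fin (m + 1) => Finset.range (m + 1 + 1)) with hG
    have hpart : ∀ i : Fin (m + 1), (G.filter (fun x => f x = i)).card ≤ (m + 2) ^ m := by
      intro i
      have hcard : (Fintype.piFinset (fun _ : Fin m => Finset.range (m + 2))).card
          = (m + 2) ^ m := by simp
      rw [← hcard]
      refine Finset.card_le_card_of_injOn (fun x j => x (i.succAbove j)) ?_ ?_
      · intro x hx
        have hxG := (Finset.mem_filter.1 hx).1
        exact Fintype.mem_piFinset.2 fun j => Fintype.mem_piFinset.1 hxG _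
      · intro x hx y hy hxy
        obtain ⟨hxG, hxi⟩ := Finset.mem_filter.1 hx
        obtain ⟨hyG, hyi⟩ := Finset.mem_filter.1 hy
        by_contra hne
        obtain ⟨j, hj, hxyj⟩ := hf x hxG y hyG hne (hxi.trans hyi.symm)
        obtain ⟨k, rfl⟩ := Fin.exists_succAbove_eq (hxi ▸ hj)
        exact hxyj (congrFun hxy k)
    have hle := Finset.card_le_mul_card_image_of_maps_to (s := G) (t := Finset.univ)
      (f := f) (fun _ _ => Finset.mem_univ _) _ (fun i _ => hpart i)
    have hGcard : G.card = (m + 2) ^ (m + 1) := by simp [hG]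
    rw [hGcard, Finset.card_univ, Fintype.card_fin, pow_succ] at hle
    have := Nat.le_of_mul_le_mul_left hle (by positivity)
    omega

/-- Some set with `hcov d + 1` points is not coverable. -/
theorem exists_not_coverable_ncard_eq_hcov_add_one {d : ℕ} (hd : 1 ≤ d) :
    ∃ S : Set (Fin d → ℕ), S.Finite ∧ S.ncard = hcov d + 1 ∧ ¬ Coverable S := by
  have : Nonempty (Fin d) := ⟨⟨0, hd⟩⟩
  by_contra! hcon
  have hbdd : BddAbove
      {t : ℕ | ∀ S : Set (Fin d → ℕ), S.Finite → S.ncard = t → Coverable S} := by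
    set G := Fintype.piFinset (fun _ : Fin d => Finset.range (d + 1))
    refine ⟨G.card, fun t ht => ?_⟩
    by_contra! hlt
    obtain ⟨T, hGT, hT⟩ := Infinite.exists_superset_card_eq G t hlt.le
    exact not_coverable_grid d
      ((ht T T.finite_toSet (by rw [Set.ncard_coe_finset, hT])).mono (by exact_mod_cast hGT))
  have : hcov d + 1 ≤ hcov d := le_csSup hbdd hcon
  omega

/-- A non-coverable set with fewer than `q` points defeats every strategy on a book graph with
`q` colors. -/
theorem not_hatWinning_bookGraph {d n q : ℕ} [Nonempty (Fin d)] {S : Set (Fin d → ℕ)}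
    (hS : S.Finite) (hcard : S.ncard < q) (hnot : ¬ Coverable S) :
    ¬ HatWinning (bookGraph d n) q := by
  rintro ⟨g, hg⟩
  have : NeZero q := ⟨by omega⟩
  have hrelabel : ∀ j : Fin d, ∃ e : ℕ → Fin q, Set.InjOn e ((fun x => x j) '' S) := by
    intro j
    have hle : ((fun x : Fin d → ℕ => x j) '' S).encard ≤ (Set.univ : Set (Fin q)).encard := by
      refine (Set.encard_image_le _ _).trans ?_
      rw [← hS.cast_ncard_eq, Set.encard_univ, ENat.card_eq_coe_fintype_card, Fintype.card_fin]
      exact_mod_cast hcard.le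
    obtain ⟨e, -, he⟩ := (hS.image _).exists_injOn_of_encard_le hle
    exact ⟨e, he⟩
  choose e he using hrelabel
  let coloring (x : Fin d → ℕ) (c : Fin n → Fin q) : Fin d ⊕ Fin n → Fin q :=
    Sum.elim (fun j => e j (x j)) c
  have hpage : ∀ v : Fin n, ∃ a : Fin q, ∀ x ∈ S,
      g (Sum.inr v) (fun w => coloring x 0 w.1) ≠ a := by
    intro v
    by_contra! hcon
    have huniv : (fun x => g (Sum.inr v) (fun w => coloring x 0 w.1)) '' S = Set.univ :=
      Set.eq_univ_of_forall hcon
    have := Set.ncard_image_le (f := fun x => g (Sum.inr v) (fun w => coloring x 0 w.1)) hS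
    rw [huniv, Set.ncard_univ, Nat.card_fin] at this
    omega
  choose c hc using hpage
  have hspine : ∀ x ∈ S, ∃ i : Fin d,
      g (Sum.inl i) (fun w => coloring x c w.1) = e i (x i) := by
    intro x hx
    obtain ⟨v | v, hv⟩ := hg (coloring x c)
    · exact ⟨v, hv⟩
    · refine absurd ?_ (hc v x hx)
      refine Eq.trans ?_ hv
      congr 1
      funext ⟨w, hw⟩
      rcases w with w | w
      · rfl
      · simp [bookGraph] at hw
  choose! f hf using hspine
  refine hnot ⟨f, fun x hx y hy hne hfxy => ?_⟩
  by_contra! hcon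
  have hview : g (Sum.inl (f x)) (fun w => coloring x c w.1)
      = g (Sum.inl (f x)) (fun w => coloring y c w.1) := by
    congr 1
    funext ⟨w, hw⟩
    rcases w with j | v
    · have hj : j ≠ f x := by
        rintro rfl
        exact hw.1 rfl
      simp [coloring, hcon j hj]
    · rfl
  have hcolor : e (f x) (x (f x)) = e (f x) (y (f x)) := by
    rw [← hf x hx, hview, hfxy, hf y hy]
  have hsame : x (f x) = y (f x) := he (f x) ⟨x, hx, rfl⟩ ⟨y, hy, rfl⟩ hcolor
  refine hne (funext fun j => ?_)
  by_cases hj : j = f x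
  · rw [hj, hsame]
  · exact hcon j hj

/-- Upper bound of Lemma 5: with `q + 1` colors, where `q = h(ℕ^d) + 1`, the
players have no winning strategy on `B_{d,n}`; consequently
`HG(B_{d,n}) ≤ h(ℕ^d) + 1` for all `n`. -/
theorem hatGuessing_book_le (d n : ℕ) (hd : 1 ≤ d) (hn : 1 ≤ n)
    (q : ℕ) (hq : q = hcov d + 1) :
    ¬ HatWinning (bookGraph d n) (q + 1) ∧
      hatGuessingNumber (bookGraph d n) ≤ hcov d + 1 := by
  have : Nonempty (Fin d) := ⟨⟨0, hd⟩⟩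
  obtain ⟨S, hS, hcard, hnot⟩ := exists_not_coverable_ncard_eq_hcov_add_one hd
  refine ⟨not_hatWinning_bookGraph hS (by omega) hnot, csSup_le' fun r hr => ?_⟩
  by_contra! hlt
  exact not_hatWinning_bookGraph hS (by omega) hnot hr
end
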